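/- Let p < q be reals, let 1 ≤ r ≤ n be integers, let f be (n+1)-times continuously differentiable on [p,q], and let x, x_0, …, x_n be pairwise distinct points of [p,q]. Then there exists ξ in the smallest closed interval containing x, x_0, …, x_n such that f(x) = Σ_{i=0}^{r−1} f[x_0, …, x_i]·∏_{j=0}^{i−1}(x − x_j) + d_{r,r+1,…,n}[x]·∏_{i=0}^{r−1}(x − x_i) + (f^{(n+1)}(ξ)/(n+1)!)·∏_{i=0}^{n}(x − x_i). -/

import Mathlib

/-- Divided difference `f[y i, y (i+1), …, y j]` defined by the standard recursion
`f[y_i,…,y_j] = (f[y_{i+1},…,y_j] − f[y_i,…,y_{j−1}])/(y_j − y_i)`. -/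
noncomputable def divDiff (f : ℝ → ℝ) (y : ℕ → ℝ) (i j : ℕ) : ℝ :=
  if _h : j ≤ i then f (y i)
  else (divDiff f y (i + 1) j - divDiff f y i (j - 1)) / (y j - y i)
termination_by j - i
decreasing_by all_goals omega

/-- Neville iteration: `neville xs x g i j` is the iterate built from the initial
values `g j` (at node `xs j`) over the nodes `xs j, …, xs (j+i)`. -/
noncomputable def neville (xs : ℕ → ℝ) (x : ℝ) (g : ℕ → ℝ) : ℕ → ℕ → ℝ
  | 0, j => g j
  | i + 1, j =>
      ((xs (i + 1 + j) - x) * neville xs x g i j - (xs j - x) * neville xs x g i (j + 1)) /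
        (xs (i + 1 + j) - xs j)

/-- Aitken iteration with base index `r`: `aitken xs x g r i j` is the iterate
`d_{r,r+1,…,i,j}` (for `r ≤ i < j`) built from the initial values `g j` at the nodes `xs j`. -/
noncomputable def aitken (xs : ℕ → ℝ) (x : ℝ) (g : ℕ → ℝ) (r : ℕ) (i j : ℕ) : ℝ :=
  if _h : i ≤ r then ((xs j - x) * g r - (xs r - x) * g j) / (xs j - xs r)
  else ((xs j - x) * aitken xs x g r (i - 1) i - (xs i - x) * aitken xs x g r (i - 1) j) /
        (xs j - xs i)
termination_by i
decreasing_by all_goals omega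

/-- The full Aitken iterate `d_{r,r+1,…,n}` (equal to the initial value when `n = r`). -/
noncomputable def aitkenLast (xs : ℕ → ℝ) (x : ℝ) (g : ℕ → ℝ) (r n : ℕ) : ℝ :=
  if n ≤ r then g n else aitken xs x g r (n - 1) n

/-- Confluent divided difference `g[x,…,x (m times), xi]`, defined using
`g[x,…,x (m times)] = g^{(m−1)}(x)/(m−1)!` and `g[xi] = g xi`. -/
noncomputable def confDD (g : ℝ → ℝ) (x xi : ℝ) : ℕ → ℝ
  | 0 => g xi
  | m + 1 => (confDD g x xi m - iteratedDeriv m g x / (Nat.factorial m : ℝ)) / (xi - x)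

open Polynomial in
theorem dd_poly (f : ℝ → ℝ) (y : ℕ → ℝ) (n : ℕ)
    (hy : ∀ i j, i ≤ n → j ≤ n → i ≠ j → y i ≠ y j) (k : ℕ) :
    ∀ a, a + k ≤ n → ∃ P : ℝ[X], P.natDegree ≤ k ∧ P.coeff k = divDiff f y a (a + k) ∧
      ∀ i, a ≤ i → i ≤ a + k → P.eval (y i) = f (y i) := by
  induction k with
  | zero =>
    intro a _
    refine ⟨C (f (y a)), by simp, ?_, ?_⟩
    · rw [divDiff]; simp
    · intro i h1 h2
      obtain rfl : i = a := by omega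
      simp
  | succ k ih =>
    intro a ha
    obtain ⟨P, hP1, hP2, hP3⟩ := ih a (by omega)
    obtain ⟨Q, hQ1, hQ2, hQ3⟩ := ih (a + 1) (by omega)
    have hne : y (a + (k + 1)) - y a ≠ 0 := sub_ne_zero.2 (hy _ _ (by omega) (by omega) (by omega))
    have h1 : (Q * (X - C (y a))).natDegree ≤ k + 1 :=
      natDegree_mul_le_of_le hQ1 (natDegree_X_sub_C_le _)
    have h2 : (P * (X - C (y (a + (k + 1))))).natDegree ≤ k + 1 :=
      natDegree_mul_le_of_le hP1 (natDegree_X_sub_C_le _)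
    refine ⟨C (y (a + (k + 1)) - y a)⁻¹ * (Q * (X - C (y a)) - P * (X - C (y (a + (k + 1))))),
      ?_, ?_, ?_⟩
    · exact (natDegree_C_mul_le _ _).trans ((natDegree_sub_le_of_le h1 h2).trans (max_self _).le)
    · have e1 : Q.coeff (k + 1) = 0 := coeff_eq_zero_of_natDegree_lt (by omega)
      have e2 : P.coeff (k + 1) = 0 := coeff_eq_zero_of_natDegree_lt (by omega)
      rw [coeff_C_mul, coeff_sub, coeff_mul_X_sub_C, coeff_mul_X_sub_C, e1, e2, hP2, hQ2]
      conv_rhs => rw [divDiff]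
      rw [dif_neg (by omega)]
      rw [show a + 1 + k = a + (k + 1) by omega, show a + (k + 1) - 1 = a + k by omega]
      field_simp
      ring
    · intro i hi1 hi2
      simp only [eval_mul, eval_C, eval_sub, eval_X]
      rcases eq_or_ne i a with rfl | hia
      · rw [hP3 _ (by omega) (by omega)]
        field_simp
        ring
      · rcases eq_or_ne i (a + (k + 1)) with rfl | hib
        · rw [hQ3 _ (by omega) (by omega)]
          field_simp
          ring
        · rw [hP3 _ (by omega) (by omega), hQ3 _ (by omega) (by omega)]
          field_simp
          ring

open Polynomial in
/-- Newton interpolation polynomial. -/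
noncomputable def newt (f : ℝ → ℝ) (y : ℕ → ℝ) (r : ℕ) : ℝ[X] :=
  ∑ i ∈ Finset.range r, C (divDiff f y 0 i) * Lagrange.nodal (Finset.range i) y

open Polynomial in
theorem newt_coeff (f : ℝ → ℝ) (y : ℕ → ℝ) (r m : ℕ) (h : r ≤ m) : (newt f y r).coeff m = 0 := by
  rw [newt, finsetSum_coeff]
  refine Finset.sum_eq_zero fun i hi => ?_
  rw [coeff_C_mul, coeff_eq_zero_of_natDegree_lt, mul_zero]
  have := Finset.mem_range.1 hi
  rw [Lagrange.natDegree_nodal, Finset.card_range]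
  omega

open Polynomial in
theorem newt_interp (f : ℝ → ℝ) (y : ℕ → ℝ) (n : ℕ)
    (hy : ∀ i j, i ≤ n → j ≤ n → i ≠ j → y i ≠ y j) (r : ℕ) (hr : r ≤ n + 1) :
    ∀ i < r, (newt f y r).eval (y i) = f (y i) := by
  induction r with
  | zero => intro i hi; omega
  | succ r ih =>
    have ih := ih (by omega)
    obtain ⟨P, hP1, hP2, hP3⟩ := dd_poly f y n hy r 0 (by omega)
    have hs : newt f y (r + 1)
        = newt f y r + C (divDiff f y 0 r) * Lagrange.nodal (Finset.range r) y := by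
      rw [newt, Finset.sum_range_succ]; rfl
    have hdeg : (Lagrange.nodal (Finset.range r) y).natDegree = r := by
      rw [Lagrange.natDegree_nodal, Finset.card_range]
    have hmon : (Lagrange.nodal (Finset.range r) y).coeff r = 1 := by
      have := (Lagrange.nodal_monic (s := Finset.range r) (v := y)).coeff_natDegree
      rwa [hdeg] at this
    have key : P = newt f y (r + 1) := by
      refine eq_of_degree_sub_lt_of_eval_finset_eq ((Finset.range r).image y) ?_ ?_
      · rw [Finset.card_image_of_injOn, Finset.card_range, degree_lt_iff_coeff_zero]
        · intro m hm
          rw [hs, coeff_sub, coeff_add, newt_coeff _ _ _ _ hm, coeff_C_mul]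
          rcases eq_or_lt_of_le hm with rfl | hlt
          · rw [hP2, hmon]; simp
          · rw [coeff_eq_zero_of_natDegree_lt (by omega : P.natDegree < m),
              coeff_eq_zero_of_natDegree_lt
                (by omega : (Lagrange.nodal (Finset.range r) y).natDegree < m)]
            simp
        · intro a ha b hb hab
          by_contra hne
          have h1 := Finset.mem_range.1 (Finset.mem_coe.1 ha)
          have h2 := Finset.mem_range.1 (Finset.mem_coe.1 hb)
          exact hy a b (by omega) (by omega) hne hab
      · intro t ht
        obtain ⟨i, hi, rfl⟩ := Finset.mem_image.1 ht
        have h1 := Finset.mem_range.1 hi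
        rw [hs, eval_add, eval_mul, Lagrange.eval_nodal_at_node hi, ih i h1,
          hP3 i (by omega) (by omega)]
        simp
    intro i hi
    rw [← key]
    exact hP3 i (by omega) (by omega)

theorem divDiff_shift (f : ℝ → ℝ) (y z : ℕ → ℝ) (h : ∀ i, y (i + 1) = z i) (k : ℕ) :
    ∀ a, divDiff f y (a + 1) (a + 1 + k) = divDiff f z a (a + k) := by
  induction k with
  | zero =>
    intro a
    rw [divDiff]
    conv_rhs => rw [divDiff]
    simp [h]
  | succ k ih =>
    intro a
    rw [divDiff]
    conv_rhs => rw [divDiff]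
    rw [dif_neg (by omega), dif_neg (by omega)]
    have e1 := ih (a + 1)
    have e2 := ih a
    rw [show a + 1 + (k + 1) - 1 = a + 1 + k by omega, show a + (k + 1) - 1 = a + k by omega, e2,
      show a + 1 + (k + 1) = a + 1 + 1 + k by omega, e1, show a + (k + 1) = a + 1 + k by omega,
      show a + 1 + 1 + k = a + 1 + k + 1 by omega, h, h]

theorem divDiff_cons (f : ℝ → ℝ) (X : ℕ → ℝ) (t : ℝ) (r : ℕ) (h : ∀ i < r, X i ≠ t) :
    divDiff f (fun i => if i = 0 then t else X (i - 1)) 0 r * ∏ i ∈ Finset.range r, (t - X i)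
      = f t - ∑ i ∈ Finset.range r, divDiff f X 0 i * ∏ j ∈ Finset.range i, (t - X j) := by
  induction r with
  | zero => rw [divDiff]; simp
  | succ r ih =>
    have ih := ih (fun i hi => h i (by omega))
    have hs := divDiff_shift f (fun i => if i = 0 then t else X (i - 1)) X (by simp) r 0
    rw [divDiff, dif_neg (by omega)]
    rw [show r + 1 = 0 + 1 + r by omega, hs, show 0 + 1 + r = r + 1 by omega]
    rw [Finset.sum_range_succ, ← sub_sub, ← ih, Finset.prod_range_succ]
    have hne : X r - t ≠ 0 := sub_ne_zero.2 (h r (by omega))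
    simp only [Nat.add_sub_cancel, zero_add, if_true, Nat.add_eq_zero_iff, one_ne_zero, and_false,
      if_false]
    field_simp
    ring

open Polynomial in
theorem aitken_poly (X : ℕ → ℝ) (g : ℕ → ℝ) (r n : ℕ)
    (hX : ∀ i j, i ≤ n → j ≤ n → i ≠ j → X i ≠ X j) (k : ℕ) :
    ∀ j, r + k < j → j ≤ n → ∃ P : ℝ[X], P.natDegree ≤ k + 1 ∧
      (∀ t, P.eval t = aitken X t g r (r + k) j) ∧
      (∀ i, r ≤ i → i ≤ r + k → P.eval (X i) = g i) ∧ P.eval (X j) = g j := by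
  have aux : ∀ (P Q : ℝ[X]) (a b : ℝ) (m : ℕ), P.natDegree ≤ m → Q.natDegree ≤ m →
      ∃ R : ℝ[X], R.natDegree ≤ m + 1 ∧
        ∀ t, R.eval t = ((b - t) * P.eval t - (a - t) * Q.eval t) / (b - a) := by
    intro P Q a b m hP hQ
    refine ⟨C (b - a)⁻¹ * (Q * (Polynomial.X - C a) - P * (Polynomial.X - C b)), ?_, ?_⟩
    · exact (natDegree_C_mul_le _ _).trans ((natDegree_sub_le_of_le
        (natDegree_mul_le_of_le hQ (natDegree_X_sub_C_le _))
        (natDegree_mul_le_of_le hP (natDegree_X_sub_C_le _))).trans (max_self _).le)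
    · intro t
      simp only [eval_mul, eval_C, eval_sub, eval_X]
      rw [div_eq_inv_mul]
      ring
  induction k with
  | zero =>
    intro j hj hjn
    obtain ⟨R, hR1, hR2⟩ := aux (C (g r)) (C (g j)) (X r) (X j) 0 (by simp) (by simp)
    have hne : X j - X r ≠ 0 := sub_ne_zero.2 (hX _ _ (by omega) (by omega) (by omega))
    refine ⟨R, hR1, ?_, ?_, ?_⟩
    · intro t
      rw [hR2, aitken, dif_pos (by omega)]
      simp
    · intro i h1 h2
      obtain rfl : i = r := by omega
      rw [hR2]; simp only [eval_C]; field_simp; ring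
    · rw [hR2]; simp only [eval_C]; field_simp; ring
  | succ k ih =>
    intro j hj hjn
    obtain ⟨P, hP1, hP2, hP3, hP4⟩ := ih (r + k + 1) (by omega) (by omega)
    obtain ⟨Q, hQ1, hQ2, hQ3, hQ4⟩ := ih j (by omega) (by omega)
    obtain ⟨R, hR1, hR2⟩ := aux P Q (X (r + k + 1)) (X j) (k + 1) hP1 hQ1
    have hne : X j - X (r + k + 1) ≠ 0 := sub_ne_zero.2 (hX _ _ (by omega) (by omega) (by omega))
    refine ⟨R, hR1, ?_, ?_, ?_⟩
    · intro t
      rw [hR2, aitken, dif_neg (by omega), hP2, hQ2]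
      rfl
    · intro i h1 h2
      rw [hR2]
      rcases eq_or_ne i (r + k + 1) with rfl | hi
      · rw [hP4]; field_simp; ring
      · rw [hP3 i h1 (by omega), hQ3 i h1 (by omega)]; field_simp; ring
    · rw [hR2, hQ4]; field_simp; ring

open Polynomial in
theorem aitkenLast_poly (X : ℕ → ℝ) (g : ℕ → ℝ) (r n : ℕ) (hrn : r ≤ n)
    (hX : ∀ i j, i ≤ n → j ≤ n → i ≠ j → X i ≠ X j) :
    ∃ P : ℝ[X], P.natDegree ≤ n - r ∧ (∀ t, P.eval t = aitkenLast X t g r n) ∧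
      (∀ i, r ≤ i → i ≤ n → P.eval (X i) = g i) := by
  rcases eq_or_lt_of_le hrn with rfl | hlt
  · refine ⟨C (g r), by simp, ?_, ?_⟩
    · intro t; simp [aitkenLast]
    · intro i h1 h2
      obtain rfl : i = r := by omega
      simp
  · obtain ⟨P, h1, h2, h3, h4⟩ := aitken_poly X g r n hX (n - 1 - r) n (by omega) le_rfl
    refine ⟨P, by omega, ?_, ?_⟩
    · intro t
      rw [h2, aitkenLast, if_neg (by omega), show r + (n - 1 - r) = n - 1 by omega]
    · intro i hi1 hi2
      rcases eq_or_ne i n with rfl | hi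
      · exact h4
      · exact h3 i hi1 (by omega)

theorem rolle_iter (p q : ℝ) (hpq : p < q) (N : ℕ) (g : ℝ → ℝ)
    (hg : ContDiffOn ℝ (N : ℕ) g (Set.Icc p q)) (c d : ℝ) (hc : p ≤ c) (hd : d ≤ q) (k : ℕ) :
    ∀ (j : ℕ), j + k = N → ∀ z : ℕ → ℝ, (∀ i < k, z i < z (i + 1)) →
      (∀ i ≤ k, z i ∈ Set.Icc c d) →
      (∀ i ≤ k, iteratedDerivWithin j g (Set.Icc p q) (z i) = 0) →
      ∃ ξ ∈ Set.Icc c d, iteratedDerivWithin N g (Set.Icc p q) ξ = 0 := by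
  induction k with
  | zero =>
    intro j hj z _ h2 h3
    obtain rfl : j = N := by omega
    exact ⟨z 0, h2 0 le_rfl, h3 0 le_rfl⟩
  | succ k ih =>
    intro j hj z h1 h2 h3
    have hcont : ContinuousOn (iteratedDerivWithin j g (Set.Icc p q)) (Set.Icc p q) :=
      hg.continuousOn_iteratedDerivWithin (by exact_mod_cast (by omega : j ≤ N))
        (uniqueDiffOn_Icc hpq)
    have key : ∀ i, ∃ w, i ≤ k → w ∈ Set.Ioo (z i) (z (i + 1)) ∧
        iteratedDerivWithin (j + 1) g (Set.Icc p q) w = 0 := by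
      intro i
      by_cases hi : i ≤ k
      · have ha := h2 i (by omega)
        have hb := h2 (i + 1) (by omega)
        obtain ⟨w, hw, hw0⟩ := exists_deriv_eq_zero (h1 i (by omega))
          (hcont.mono (Set.Icc_subset_Icc (hc.trans ha.1) (hb.2.trans hd)))
          ((h3 i (by omega)).trans (h3 (i + 1) (by omega)).symm)
        refine ⟨w, fun _ => ⟨hw, ?_⟩⟩
        rw [iteratedDerivWithin_succ, derivWithin_of_mem_nhds, hw0]
        exact Icc_mem_nhds ((hc.trans ha.1).trans_lt hw.1) (hw.2.trans_le (hb.2.trans hd))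
      · exact ⟨0, fun h => absurd h hi⟩
    choose w hw using key
    refine ih (j + 1) (by omega) w ?_ ?_ ?_
    · intro i hi
      exact ((hw i (by omega)).1.2).trans (hw (i + 1) (by omega)).1.1
    · intro i hi
      have := (hw i hi).1
      exact ⟨(h2 i (by omega)).1.trans this.1.le, this.2.le.trans (h2 (i + 1) (by omega)).2⟩
    · intro i hi
      exact (hw i hi).2

theorem rolle_finset (p q : ℝ) (hpq : p < q) (N : ℕ) (g : ℝ → ℝ)
    (hg : ContDiffOn ℝ (N : ℕ) g (Set.Icc p q)) (s : Finset ℝ) (hs : s.card = N + 1)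
    (hsub : ∀ t ∈ s, t ∈ Set.Icc p q) (h0 : ∀ t ∈ s, g t = 0) :
    ∃ ξ ∈ convexHull ℝ (s : Set ℝ), ξ ∈ Set.Icc p q ∧
      iteratedDerivWithin N g (Set.Icc p q) ξ = 0 := by
  let e := s.orderEmbOfFin hs
  let z : ℕ → ℝ := fun i => e ⟨min i N, by omega⟩
  have hz : ∀ i, z i ∈ s := fun i => s.orderEmbOfFin_mem hs _
  have hmono : ∀ i j, i ≤ j → z i ≤ z j := by
    intro i j hij
    refine e.monotone ?_
    rw [Fin.mk_le_mk]
    omega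
  obtain ⟨ξ, hξ, h⟩ := rolle_iter p q hpq N g hg (z 0) (z N) (hsub _ (hz _)).1 (hsub _ (hz _)).2 N 0
    (by omega) z (by
      intro i hi
      refine e.strictMono ?_
      rw [Fin.mk_lt_mk]
      omega) (fun i hi => ⟨hmono _ _ (by omega), hmono _ _ hi⟩)
    (fun i _ => by rw [iteratedDerivWithin_zero]; exact h0 _ (hz i))
  refine ⟨ξ, ?_, ?_, h⟩
  · exact (convex_convexHull ℝ (s : Set ℝ)).ordConnected.out
      (subset_convexHull ℝ _ (hz 0)) (subset_convexHull ℝ _ (hz N)) hξ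
  · exact ⟨(hsub _ (hz 0)).1.trans hξ.1, hξ.2.trans (hsub _ (hz N)).2⟩

open Polynomial in
theorem iteratedDeriv_poly (k : ℕ) (P : ℝ[X]) :
    iteratedDeriv k (fun t => P.eval t) = fun t => (derivative^[k] P).eval t := by
  induction k with
  | zero => simp
  | succ k ih =>
    rw [iteratedDeriv_succ, ih, Function.iterate_succ_apply']
    funext t
    exact Polynomial.deriv _

open Polynomial in
theorem iteratedDeriv_poly_top (N : ℕ) (P : ℝ[X]) (hP : P.natDegree ≤ N) (t : ℝ) :
    iteratedDeriv N (fun t => P.eval t) t = N.factorial * P.coeff N := by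
  rw [iteratedDeriv_poly]
  have h : (derivative^[N] P) = C ((N.factorial : ℝ) * P.coeff N) := by
    ext m
    rw [coeff_iterate_derivative, coeff_C]
    split_ifs with hm
    · subst hm; simp [Nat.descFactorial_self]
    · rw [coeff_eq_zero_of_natDegree_lt (by omega), smul_zero]
  simp only [h, eval_C]

open Polynomial in
theorem interp_error (p q : ℝ) (hpq : p < q) (n : ℕ)
    (f : ℝ → ℝ) (hf : ContDiffOn ℝ (n + 1 : ℕ) f (Set.Icc p q))
    (x : ℝ) (X : ℕ → ℝ)
    (hx : x ∈ Set.Icc p q) (hX : ∀ i ≤ n, X i ∈ Set.Icc p q)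
    (hxX : ∀ i ≤ n, X i ≠ x)
    (hXX : ∀ i j, i ≤ n → j ≤ n → i ≠ j → X i ≠ X j)
    (P : ℝ[X]) (hP : P.natDegree ≤ n) (hPX : ∀ i ≤ n, P.eval (X i) = f (X i)) :
    ∃ ξ ∈ convexHull ℝ (insert x (X '' Set.Iic n)),
      f x = P.eval x + iteratedDerivWithin (n + 1) f (Set.Icc p q) ξ / (Nat.factorial (n + 1) : ℝ)
            * ∏ i ∈ Finset.range (n + 1), (x - X i) := by
  set ω := Lagrange.nodal (Finset.range (n + 1)) X with hω
  have hωx : ω.eval x = ∏ i ∈ Finset.range (n + 1), (x - X i) := Lagrange.eval_nodal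
  have hω0 : ω.eval x ≠ 0 := by
    rw [hωx, Finset.prod_ne_zero_iff]
    intro i hi
    have := Finset.mem_range.1 hi
    exact sub_ne_zero.2 (hxX i (by omega)).symm
  have hdeg : ω.natDegree = n + 1 := by
    rw [hω, Lagrange.natDegree_nodal, Finset.card_range]
  have hmon : ω.coeff (n + 1) = 1 := by
    have := (Lagrange.nodal_monic (s := Finset.range (n + 1)) (v := X)).coeff_natDegree
    rwa [← hω, hdeg] at this
  obtain ⟨K, hK⟩ : ∃ K, K * ω.eval x = f x - P.eval x := ⟨_, div_mul_cancel₀ _ hω0⟩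
  set Q := P + C K * ω with hQ
  have hQdeg : Q.natDegree ≤ n + 1 :=
    natDegree_add_le_of_degree_le (by omega) ((natDegree_C_mul_le _ _).trans hdeg.le)
  have hQc : Q.coeff (n + 1) = K := by
    rw [hQ, coeff_add, coeff_C_mul, hmon, coeff_eq_zero_of_natDegree_lt (by omega)]
    ring
  have hQs : ∀ (m : WithTop ℕ∞), ContDiff ℝ m (fun t => Q.eval t) := fun m => by
    simpa using Q.contDiff_aeval (𝕜 := ℝ) (R := ℝ) m
  let s : Finset ℝ := insert x ((Finset.range (n + 1)).image X)
  have hcard : s.card = n + 1 + 1 := by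
    rw [Finset.card_insert_of_notMem, Finset.card_image_of_injOn, Finset.card_range]
    · intro a ha b hb hab
      by_contra hne
      have h1 := Finset.mem_range.1 (Finset.mem_coe.1 ha)
      have h2 := Finset.mem_range.1 (Finset.mem_coe.1 hb)
      exact hXX a b (by omega) (by omega) hne hab
    · intro h
      obtain ⟨i, hi, h⟩ := Finset.mem_image.1 h
      have h1 := Finset.mem_range.1 hi
      exact hxX i (by omega) h
  have hmem : ∀ t ∈ s, t = x ∨ ∃ i ≤ n, X i = t := by
    intro t ht
    rcases Finset.mem_insert.1 ht with h | h
    · exact Or.inl h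
    · obtain ⟨i, hi, h⟩ := Finset.mem_image.1 h
      have h1 := Finset.mem_range.1 hi
      exact Or.inr ⟨i, by omega, h⟩
  obtain ⟨ξ, h1, h2, h3⟩ := rolle_finset p q hpq (n + 1) (f - fun t => Q.eval t)
    (hf.sub (hQs _).contDiffOn) s hcard (by
      intro t ht
      rcases hmem t ht with rfl | ⟨i, hi, rfl⟩
      · exact hx
      · exact hX i hi) (by
      intro t ht
      rcases hmem t ht with rfl | ⟨i, hi, rfl⟩
      · simp only [Pi.sub_apply, hQ, eval_add, eval_mul, eval_C, hK]; ring
      · have hz : ω.eval (X i) = 0 :=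
          Lagrange.eval_nodal_at_node (Finset.mem_range.2 (by omega))
        simp only [Pi.sub_apply, hQ, eval_add, eval_mul, eval_C, hz, hPX i hi]; ring)
  refine ⟨ξ, convexHull_mono ?_ h1, ?_⟩
  · intro t ht
    rcases hmem t ht with rfl | ⟨i, hi, rfl⟩
    · exact Set.mem_insert _ _
    · exact Set.mem_insert_of_mem _ ⟨i, hi, rfl⟩
  · rw [iteratedDerivWithin_sub h2 (uniqueDiffOn_Icc hpq) (hf ξ h2) (hQs _).contDiffWithinAt,
      iteratedDerivWithin_eq_iteratedDeriv (uniqueDiffOn_Icc hpq) (hQs _).contDiffAt h2,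
      iteratedDeriv_poly_top _ _ hQdeg, hQc, sub_eq_zero] at h3
    have hfac : ((n + 1).factorial : ℝ) ≠ 0 := by positivity
    rw [h3, mul_div_cancel_left₀ _ hfac, ← hωx, hK]
    ring

theorem stmt_3 (p q : ℝ) (hpq : p < q) (r n : ℕ) (hr : 1 ≤ r) (hrn : r ≤ n)
    (f : ℝ → ℝ) (hf : ContDiffOn ℝ (n + 1 : ℕ) f (Set.Icc p q))
    (x : ℝ) (X : ℕ → ℝ)
    (hx : x ∈ Set.Icc p q) (hX : ∀ i ≤ n, X i ∈ Set.Icc p q)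
    (hxX : ∀ i ≤ n, X i ≠ x)
    (hXX : ∀ i j, i ≤ n → j ≤ n → i ≠ j → X i ≠ X j) :
    ∃ ξ ∈ convexHull ℝ (insert x (X '' Set.Iic n)),
      f x = (∑ i ∈ Finset.range r, divDiff f X 0 i * ∏ j ∈ Finset.range i, (x - X j))
        + aitkenLast X x (fun j => divDiff f (fun i => if i = 0 then X j else X (i - 1)) 0 r) r n * ∏ i ∈ Finset.range r, (x - X i)
        + iteratedDerivWithin (n + 1) f (Set.Icc p q) ξ / (Nat.factorial (n + 1) : ℝ)
            * ∏ i ∈ Finset.range (n + 1), (x - X i) := by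
  obtain ⟨D, hD1, hD2, hD3⟩ := aitkenLast_poly X
    (fun j => divDiff f (fun i => if i = 0 then X j else X (i - 1)) 0 r) r n hrn hXX
  have hN : ∀ t, (newt f X r).eval t
      = ∑ i ∈ Finset.range r, divDiff f X 0 i * ∏ j ∈ Finset.range i, (t - X j) := by
    intro t
    rw [newt, Polynomial.eval_finsetSum]
    refine Finset.sum_congr rfl fun i _ => ?_
    rw [Polynomial.eval_mul, Polynomial.eval_C, Lagrange.eval_nodal]
  have hNd : (newt f X r).natDegree ≤ n :=
    Polynomial.natDegree_le_iff_coeff_eq_zero.2 fun m hm => newt_coeff f X r m (by omega)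
  have hdeg : (D * Lagrange.nodal (Finset.range r) X).natDegree ≤ n := by
    refine (Polynomial.natDegree_mul_le_of_le hD1 (n := r) ?_).trans (by omega)
    rw [Lagrange.natDegree_nodal, Finset.card_range]
  obtain ⟨ξ, hξ, h⟩ := interp_error p q hpq n f hf x X hx hX hxX hXX
    (newt f X r + D * Lagrange.nodal (Finset.range r) X)
    (Polynomial.natDegree_add_le_of_degree_le hNd hdeg) (by
      intro i hi
      rw [Polynomial.eval_add, Polynomial.eval_mul]
      by_cases hir : i < r
      · rw [Lagrange.eval_nodal_at_node (Finset.mem_range.2 hir),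
          newt_interp f X n hXX r (by omega) i hir]
        ring
      · rw [hD3 i (by omega) hi, Lagrange.eval_nodal, divDiff_cons f X (X i) r
          (fun k hk => hXX k i (by omega) hi (by omega)), hN]
        ring)
  refine ⟨ξ, hξ, ?_⟩
  rw [Polynomial.eval_add, Polynomial.eval_mul, hN, hD2, Lagrange.eval_nodal] at h
  exact h
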